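/- For all α > 0 and β > 0 with α + β < π, one has Λ(α) + Λ(β) + Λ(π − α − β) ≤ 3·Λ(π/3), i.e. among all ideal hyperbolic simplices the regular ideal simplex (all dihedral angles equal to π/3) has maximal volume. -/

import Mathlib

/-- The Lobachevsky function `Λ(θ) = -∫₀^θ log |2 sin u| du`. -/
noncomputable def lobachevsky (θ : ℝ) : ℝ :=
  -∫ u in (0:ℝ)..θ, Real.log |2 * Real.sin u|

/-! On the open triangle of dihedral angles the volume is a concave function. Since the second
derivative of `Λ` is `-cot`, this says that `∑ i, cot (a i) * d i ^ 2 ≥ 0` whenever the angles `a i`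
of a triangle are perturbed in a direction `d` with `∑ i, d i = 0`. Up to a positive factor the sum
is `p ^ 2 + 2 * p * q * cos (a 2) + q ^ 2` with `p = d 0 * sin (a 1)` and `q = d 1 * sin (a 0)`.
The volume is moreover invariant under cyclic permutations of the angles, whose average is
`(π / 3, π / 3, π / 3)`, so Jensen's inequality gives the bound.
-/

theorem sum_comp_addRight {G M : Type*} [AddGroup G] [Fintype G] [AddCommMonoid M] (a : G → M) :
    ∑ k, a ∘ Equiv.addRight k = fun _ ↦ ∑ i, a i := by
  ext i
  simpa using Equiv.sum_comp (Equiv.addLeft i) a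

section LineMap

variable {𝕜 E β : Type*} [Ring 𝕜] [PartialOrder 𝕜] [IsOrderedRing 𝕜] [AddCommGroup E] [Module 𝕜 E]
  [AddCommMonoid β] [PartialOrder β] [SMul 𝕜 β]

theorem concaveOn_of_forall_comp_lineMap {s : Set E} {f : E → β} (hs : Convex 𝕜 s)
    (hf : ∀ x ∈ s, ∀ y ∈ s, ConcaveOn 𝕜 (Set.Icc 0 1) (f ∘ AffineMap.lineMap (k := 𝕜) x y)) :
    ConcaveOn 𝕜 s f := by
  refine ⟨hs, fun x hx y hy a b ha hb hab ↦ ?_⟩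
  have hchord := (hf x hx y hy).2 (Set.left_mem_Icc.2 zero_le_one) (Set.right_mem_Icc.2 zero_le_one)
    ha hb hab
  obtain rfl : a = 1 - b := eq_sub_of_add_eq hab
  simpa [AffineMap.lineMap_apply_module] using hchord

end LineMap

section Lobachevsky

open Real MeasureTheory

theorem intervalIntegrable_log_abs_two_mul_sin (a b : ℝ) :
    IntervalIntegrable (fun u ↦ log |2 * sin u|) volume a b :=
  MeromorphicOn.intervalIntegrable_log_norm (f := fun u ↦ 2 * sin u) fun u _ ↦
    AnalyticAt.meromorphicAt (by fun_prop)

theorem hasDerivAt_lobachevsky {x : ℝ} (hx : sin x ≠ 0) :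
    HasDerivAt lobachevsky (-log |2 * sin x|) x := by
  have hmeas : Measurable fun u ↦ log |2 * sin u| := by fun_prop
  have hcont : ContinuousAt (fun u ↦ log |2 * sin u|) x :=
    ContinuousAt.log (by fun_prop) (by simpa using hx)
  exact (intervalIntegral.integral_hasDerivAt_right (intervalIntegrable_log_abs_two_mul_sin 0 x)
    hmeas.stronglyMeasurable.stronglyMeasurableAtFilter hcont).neg

theorem hasDerivAt_neg_log_abs_two_mul_sin {x : ℝ} (hx : sin x ≠ 0) :
    HasDerivAt (fun u ↦ -log |2 * sin u|) (-cot x) x := by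
  simp only [log_abs]
  refine (((hasDerivAt_sin x).const_mul 2).log (by simpa using hx)).neg.congr_deriv ?_
  rw [cot_eq_cos_div_sin, mul_div_mul_left _ _ two_ne_zero]

end Lobachevsky

section IdealSimplex

open Real Set

/-- The triples of dihedral angles at a vertex of an ideal hyperbolic simplex; opposite edges have
equal dihedral angles, so such a triple describes the whole simplex. -/
def idealSimplexAngles : Set (Fin 3 → ℝ) :=
  {a | (∀ i, 0 < a i) ∧ ∑ i, a i = π}

/-- The volume of the ideal hyperbolic simplex with dihedral angles `a 0`, `a 1`, `a 2`, by
Milnor's formula; meaningful for `a ∈ idealSimplexAngles`. -/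
noncomputable def idealSimplexVolume (a : Fin 3 → ℝ) : ℝ :=
  ∑ i, lobachevsky (a i)

theorem convex_idealSimplexAngles : Convex ℝ idealSimplexAngles := by
  rintro a ⟨ha, hasum⟩ b ⟨hb, hbsum⟩ s t hs ht hst
  refine ⟨fun i ↦ convex_Ioi (0 : ℝ) (ha i) (hb i) hs ht hst, ?_⟩
  simp only [Pi.add_apply, Pi.smul_apply, smul_eq_mul, Finset.sum_add_distrib, ← Finset.mul_sum,
    hasum, hbsum, ← add_mul, hst, one_mul]

theorem sin_pos_of_mem_idealSimplexAngles {a : Fin 3 → ℝ} (ha : a ∈ idealSimplexAngles)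
    (i : Fin 3) : 0 < sin (a i) := by
  obtain ⟨hpos, hsum⟩ := ha
  refine sin_pos_of_pos_of_lt_pi (hpos i) (hsum ▸ ?_)
  exact Finset.single_lt_sum (j := i + 1) (by simp) (Finset.mem_univ i) (Finset.mem_univ _)
    (hpos _) fun j _ _ ↦ (hpos j).le

theorem sum_cot_mul_sq_eq {x y z d e f : ℝ} (hx : sin x ≠ 0) (hy : sin y ≠ 0) (hz : sin z ≠ 0)
    (hxyz : x + y + z = π) (hdef : d + e + f = 0) :
    cot x * d ^ 2 + cot y * e ^ 2 + cot z * f ^ 2 =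
      ((d * sin y) ^ 2 + 2 * (d * sin y) * (e * sin x) * cos z + (e * sin x) ^ 2) /
        (sin x * sin y * sin z) := by
  have hf : f = -(d + e) := by linarith
  have hsin_x : sin x = sin y * cos z + cos y * sin z := by
    rw [← sin_add, ← sin_pi_sub, show π - x = y + z by linarith]
  have hsin_y : sin y = sin x * cos z + cos x * sin z := by
    rw [← sin_add, ← sin_pi_sub, show π - y = x + z by linarith]
  simp only [cot_eq_cos_div_sin, hf]
  field_simp
  linear_combination (-d ^ 2 * sin y) * hsin_y - (e ^ 2 * sin x) * hsin_x

theorem sq_add_two_mul_mul_cos_add_sq_nonneg (p q θ : ℝ) :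
    0 ≤ p ^ 2 + 2 * p * q * cos θ + q ^ 2 := by
  calc 0 ≤ (p + q * cos θ) ^ 2 + (q * sin θ) ^ 2 := by positivity
    _ = p ^ 2 + 2 * p * q * cos θ + q ^ 2 := by linear_combination q ^ 2 * sin_sq_add_cos_sq θ

theorem sum_cot_mul_sq_nonneg {a d : Fin 3 → ℝ} (ha : a ∈ idealSimplexAngles)
    (hd : ∑ i, d i = 0) : 0 ≤ ∑ i, cot (a i) * d i ^ 2 := by
  have hsin := sin_pos_of_mem_idealSimplexAngles ha
  have hsum : a 0 + a 1 + a 2 = π := by rw [← Fin.sum_univ_three, ha.2]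
  rw [Fin.sum_univ_three] at hd ⊢
  rw [sum_cot_mul_sq_eq (hsin 0).ne' (hsin 1).ne' (hsin 2).ne' hsum hd]
  exact div_nonneg (sq_add_two_mul_mul_cos_add_sq_nonneg _ _ _)
    (mul_pos (mul_pos (hsin 0) (hsin 1)) (hsin 2)).le

theorem hasDerivAt_idealSimplexVolume_comp {γ : ℝ → Fin 3 → ℝ} {d : Fin 3 → ℝ} {t : ℝ}
    (hγ : HasDerivAt γ d t) (hsin : ∀ i, sin (γ t i) ≠ 0) :
    HasDerivAt (idealSimplexVolume ∘ γ) (∑ i, -log |2 * sin (γ t i)| * d i) t := by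
  have hterm (i : Fin 3) :
      HasDerivAt (fun s ↦ lobachevsky (γ s i)) (-log |2 * sin (γ t i)| * d i) t :=
    HasDerivAt.comp (h₂ := lobachevsky) t (hasDerivAt_lobachevsky (hsin i)) (hasDerivAt_pi.1 hγ i)
  exact HasDerivAt.fun_sum (u := Finset.univ) fun i _ ↦ hterm i

theorem hasDerivAt_sum_neg_log_abs_two_mul_sin_mul {γ : ℝ → Fin 3 → ℝ} {d : Fin 3 → ℝ} {t : ℝ}
    (hγ : HasDerivAt γ d t) (hsin : ∀ i, sin (γ t i) ≠ 0) :
    HasDerivAt (fun s ↦ ∑ i, -log |2 * sin (γ s i)| * d i) (-∑ i, cot (γ t i) * d i ^ 2) t := by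
  have hterm (i : Fin 3) :
      HasDerivAt (fun s ↦ -log |2 * sin (γ s i)|) (-cot (γ t i) * d i) t :=
    HasDerivAt.comp (h₂ := fun u ↦ -log |2 * sin u|) t
      (hasDerivAt_neg_log_abs_two_mul_sin (hsin i)) (hasDerivAt_pi.1 hγ i)
  refine (HasDerivAt.fun_sum fun i _ ↦ (hterm i).mul_const (d i)).congr_deriv ?_
  simp only [neg_mul, Finset.sum_neg_distrib, mul_assoc, ← sq]

theorem concaveOn_idealSimplexVolume : ConcaveOn ℝ idealSimplexAngles idealSimplexVolume := by
  refine concaveOn_of_forall_comp_lineMap convex_idealSimplexAngles fun a ha b hb ↦ ?_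
  set γ := AffineMap.lineMap (k := ℝ) a b
  have hγ (t : ℝ) : HasDerivAt γ (b - a) t := AffineMap.hasDerivAt_lineMap
  have hmem {t : ℝ} (ht : t ∈ Icc 0 1) : γ t ∈ idealSimplexAngles :=
    convex_idealSimplexAngles.lineMap_mem ha hb ht
  have hsin {t : ℝ} (ht : t ∈ Icc 0 1) (i : Fin 3) : sin (γ t i) ≠ 0 :=
    (sin_pos_of_mem_idealSimplexAngles (hmem ht) i).ne'
  have hderiv {t : ℝ} (ht : t ∈ Icc 0 1) :=
    hasDerivAt_idealSimplexVolume_comp (hγ t) (hsin ht)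
  have hderiv₂ {t : ℝ} (ht : t ∈ Icc 0 1) :=
    hasDerivAt_sum_neg_log_abs_two_mul_sin_mul (hγ t) (hsin ht)
  have hsum : ∑ i, (b - a) i = 0 := by simp [ha.2, hb.2]
  exact concaveOn_of_hasDerivWithinAt2_nonpos (convex_Icc 0 1)
    (fun t ht ↦ (hderiv ht).continuousAt.continuousWithinAt)
    (fun t ht ↦ (hderiv (interior_subset ht)).hasDerivWithinAt)
    (fun t ht ↦ (hderiv₂ (interior_subset ht)).hasDerivWithinAt)
    fun t ht ↦ neg_nonpos.2 (sum_cot_mul_sq_nonneg (hmem (interior_subset ht)) hsum)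

theorem comp_perm_mem_idealSimplexAngles {a : Fin 3 → ℝ} (ha : a ∈ idealSimplexAngles)
    (σ : Equiv.Perm (Fin 3)) : a ∘ σ ∈ idealSimplexAngles :=
  ⟨fun i ↦ ha.1 (σ i), (Equiv.sum_comp σ a).trans ha.2⟩

theorem idealSimplexVolume_comp_perm (a : Fin 3 → ℝ) (σ : Equiv.Perm (Fin 3)) :
    idealSimplexVolume (a ∘ σ) = idealSimplexVolume a :=
  Equiv.sum_comp σ fun i ↦ lobachevsky (a i)

theorem idealSimplexVolume_le_regular {a : Fin 3 → ℝ} (ha : a ∈ idealSimplexAngles) :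
    idealSimplexVolume a ≤ idealSimplexVolume fun _ ↦ π / 3 :=
  calc idealSimplexVolume a
      = ∑ k, (1 / 3 : ℝ) • idealSimplexVolume (a ∘ Equiv.addRight k) := by
        simp only [idealSimplexVolume_comp_perm, Finset.sum_const, Finset.card_fin]
        ring
    _ ≤ idealSimplexVolume (∑ k, (1 / 3 : ℝ) • (a ∘ Equiv.addRight k)) :=
        concaveOn_idealSimplexVolume.le_map_sum (fun _ _ ↦ by norm_num) (by simp)
          fun k _ ↦ comp_perm_mem_idealSimplexAngles ha (Equiv.addRight k)
    _ = idealSimplexVolume fun _ ↦ π / 3 := by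
        rw [← Finset.smul_sum, sum_comp_addRight, ha.2]
        congr 1 with i
        simp [div_eq_inv_mul]

end IdealSimplex

/-- Among all ideal hyperbolic simplices, the regular ideal simplex (all dihedral
angles equal to `π/3`) has maximal volume:
`Λ(α) + Λ(β) + Λ(π - α - β) ≤ 3 Λ(π/3)` for `α, β > 0` with `α + β < π`. -/
theorem volume_le_regular (α β : ℝ) (hα : 0 < α) (hβ : 0 < β)
    (hαβ : α + β < Real.pi) :
    lobachevsky α + lobachevsky β + lobachevsky (Real.pi - α - β) ≤
      3 * lobachevsky (Real.pi / 3) := by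
  have hangles : ![α, β, Real.pi - α - β] ∈ idealSimplexAngles := by
    refine ⟨fun i ↦ ?_, ?_⟩
    · fin_cases i
      · exact hα
      · exact hβ
      · change 0 < Real.pi - α - β
        linarith
    · simp [Fin.sum_univ_three]
  simpa [idealSimplexVolume, Fin.sum_univ_three] using idealSimplexVolume_le_regular hangles
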